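/- One has φ(d) = φ'(w_{H*}) + φ(b), where d = d_μ = μw_J and b are the longest and shortest elements of the double coset W_J μ W_J. -/

import Mathlib

set_option synthInstance.maxHeartbeats 1000000
set_option maxHeartbeats 2000000

open scoped Classical

noncomputable section

namespace LY

/-! ## The coefficient field `ℚ(q)` -/

/-- The field `ℚ(q)` of rational functions. -/
abbrev K : Type := RatFunc ℚ

/-- The indeterminate `q`. -/
def qK : K := RatFunc.X

/-- The inclusion `ℤ[q] → ℚ(q)`. -/
def toK (p : Polynomial ℤ) : K := algebraMap (Polynomial ℚ) K (p.map (Int.castRingHom ℚ))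

/-- Evaluation of `p ∈ ℤ[q]` at `−q`, as an element of `ℚ(q)`; i.e. `p(−q)`. -/
def atNegQ (p : Polynomial ℤ) : K := Polynomial.eval₂ (Int.castRingHom K) (-qK) p

/-- The standard basis element `T_w` (resp. `a_w`) of the function model `W → ℚ(q)`
of the Hecke algebra (resp. of the Lusztig–Vogan module `M`). -/
def TT {W : Type} (w : W) : W → K := fun y => if y = w then 1 else 0

variable {B W : Type} [Group W] {M : CoxeterMatrix B}

/-- The Bruhat order on a Coxeter group: `u ≤ v` iff `v` is obtained from `u` by successive
right multiplications by reflections, each increasing the length. -/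
def BruhatLE (cs : CoxeterSystem M W) (u v : W) : Prop :=
  Relation.ReflTransGen
    (fun a b => cs.length a < cs.length b ∧ ∃ t, cs.IsReflection t ∧ b = a * t) u v

/-- Connectedness of the Coxeter diagram of `M`. -/
def DiagramConnected (M : CoxeterMatrix B) : Prop :=
  ∀ i j : B, Relation.ReflTransGen (fun a b => a ≠ b ∧ M a b ≠ 2) i j

/-- An automorphism of `W` preserving the set `S` of simple reflections, i.e. an element
of `A = Aut(W,S)`. -/
def IsDiagAut (cs : CoxeterSystem M W) (a : MulAut W) : Prop :=
  (⇑a) '' (Set.range cs.simple) = Set.range cs.simple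

/-! ## The affine setting -/

/-- All the data and axioms describing the setting: `(W,S)` is the Coxeter group of an
untwisted connected affine Dynkin diagram (an irreducible affine Weyl group); `Λ` is the
subgroup of translations (elements with finite conjugacy class), free abelian of finite
rank and of finite index; `s₀` is a hyperspecial vertex, `J = S − {s₀}`, `W_J` is the
finite subgroup generated by `J` with longest element `w_J`; `*` is the involution of `W`
given by `w* = w_J w w_J` on `W_J` and `λ* = −(ʷᴶλ)` on `Λ`; `pr` is the projection
`W → W_J` along `Λ`; `ρ` is the conjugation action of `W` on `Λ_ℚ ≅ ℚ^rank`
(via the identification `freeIso` of `Λ` with `ℤ^rank`). -/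
structure AffineData (cs : CoxeterSystem M W) where
  finB : Finite B
  conn : DiagramConnected M
  infW : Infinite W
  /-- the subgroup `Λ` of translations -/
  Lam : Subgroup W
  hLam_mem : ∀ w : W, w ∈ Lam ↔ {x : W | IsConj w x}.Finite
  hLam_normal : Lam.Normal
  hLam_comm : ∀ a ∈ Lam, ∀ b ∈ Lam, a * b = b * a
  hLam_index : Lam.FiniteIndex
  /-- `Λ` is free abelian of finite rank -/
  rank : ℕ
  freeIso : Lam ≃* Multiplicative (Fin rank → ℤ)
  /-- the hyperspecial vertex `s₀` -/
  s0 : W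
  hs0_S : s0 ∈ Set.range cs.simple
  /-- `s₀` is hyperspecial: the projection `W → W/Λ` restricts to an isomorphism from the
  subgroup generated by `S − {s₀}` onto `W/Λ`. -/
  hs0_hyper : ∀ w : W, ∃! u : W,
    u ∈ Subgroup.closure (Set.range cs.simple \ {s0}) ∧ w * u⁻¹ ∈ Lam
  hWJ_fin : (Subgroup.closure (Set.range cs.simple \ {s0}) : Set W).Finite
  /-- the longest element `w_J` of `W_J` -/
  wJ : W
  hwJ_mem : wJ ∈ Subgroup.closure (Set.range cs.simple \ {s0})
  hwJ_max : ∀ u ∈ Subgroup.closure (Set.range cs.simple \ {s0}), cs.length u ≤ cs.length wJ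
  /-- the involution `*` of `W` -/
  st : MulAut W
  hst_inv : ∀ w : W, st (st w) = w
  hst_J : ∀ u ∈ Subgroup.closure (Set.range cs.simple \ {s0}), st u = wJ * u * wJ
  hst_Lam : ∀ l ∈ Lam, st l = (wJ * l * wJ⁻¹)⁻¹
  hst_S : ∀ s ∈ Set.range cs.simple, st s ∈ Set.range cs.simple
  /-- lower Bruhat intervals are finite -/
  hBruhat_fin : ∀ w : W, {y : W | BruhatLE cs y w}.Finite
  /-- the projection `W → W_J` along `Λ` (`w ↦ w̄`) -/
  pr : W → W
  hpr : ∀ w : W, pr w ∈ Subgroup.closure (Set.range cs.simple \ {s0}) ∧ w * (pr w)⁻¹ ∈ Lam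
  /-- the conjugation action of `W` on `Λ_ℚ ≅ ℚ^rank` -/
  rho : W → ((Fin rank → ℚ) →ₗ[ℚ] (Fin rank → ℚ))
  hrho : ∀ (w : W) (l : Lam),
    rho w (fun i => ((Multiplicative.toAdd (freeIso l)) i : ℚ)) =
      fun i => ((Multiplicative.toAdd
        (freeIso ⟨w * (l : W) * w⁻¹, hLam_normal.conj_mem _ l.2 w⟩)) i : ℚ)

namespace AffineData

variable {cs : CoxeterSystem M W} (D : AffineData cs)

/-- The set `J = S − {s₀}`. -/
def Jset : Set W := Set.range cs.simple \ {D.s0}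

/-- The finite Weyl group `W_J`. -/
def WJ : Subgroup W := Subgroup.closure D.Jset

/-- `λ ∈ Λ` is a dominant translation (`λ ∈ Λ⁺`). -/
def IsDominant (l : W) : Prop :=
  l ∈ D.Lam ∧ cs.length (l * D.wJ) = cs.length l + cs.length D.wJ

/-- The embedding `Λ → Λ_ℚ = ℚ^rank`. -/
def iota (l : D.Lam) : Fin D.rank → ℚ :=
  fun i => ((Multiplicative.toAdd (D.freeIso l)) i : ℚ)

/-- `e(A)`: the dimension of the `(−1)`-eigenspace of a linear endomorphism `A` of `Λ_ℚ`. -/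
def eNeg (f : (Fin D.rank → ℚ) →ₗ[ℚ] (Fin D.rank → ℚ)) : ℕ :=
  Module.finrank ℚ (Module.End.eigenspace (f : Module.End ℚ (Fin D.rank → ℚ)) (-1))

/-- The map `A_u : λ ↦ ᵘ(λ*) = −(ᵘʷᴶλ)` on `Λ_ℚ`, for `u ∈ W_J`. -/
def Amap (u : W) : (Fin D.rank → ℚ) →ₗ[ℚ] (Fin D.rank → ℚ) := - D.rho (u * D.wJ)

/-- The invariant `φ(w) = e(A_{w̄}) − e(A_e)` for `w ∈ I_*`. -/
def phi (w : W) : ℤ := (D.eNeg (D.Amap (D.pr w)) : ℤ) - (D.eNeg (D.Amap 1) : ℤ)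

/-- The double coset `W_J x W_J`. -/
def DCoset (x : W) : Set W := {y : W | ∃ u ∈ D.WJ, ∃ v ∈ D.WJ, y = u * x * v}

/-- The set `H = J ∩ bJb⁻¹`. -/
def Hset (b : W) : Set W := D.Jset ∩ ((fun s => b * s * b⁻¹) '' D.Jset)

/-- The set `H* ⊆ J`, image of `H` under `*`. -/
def Hstar (b : W) : Set W := (⇑D.st) '' D.Hset b

/-- The subgroup `W_{H*}` generated by `H*`. -/
def WHstar (b : W) : Subgroup W := Subgroup.closure (D.Hstar b)

/-- The reflection representation `R'` of `W_{H*}`, as a subspace of `Λ_ℚ`: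
the span of the vectors `λ − ˢλ` for `λ ∈ Λ`, `s ∈ H*`. -/
def Rprime (b : W) : Submodule ℚ (Fin D.rank → ℚ) :=
  Submodule.span ℚ
    {v : Fin D.rank → ℚ | ∃ l : D.Lam, ∃ s ∈ D.Hstar b,
      v = D.iota l - D.iota ⟨s * (l : W) * s⁻¹, D.hLam_normal.conj_mem _ l.2 s⟩}

/-- `e'(A)`: the dimension of the `(−1)`-eigenspace of an endomorphism `A` of `R'`. -/
def eNeg' {b : W} (f : ↥(D.Rprime b) →ₗ[ℚ] ↥(D.Rprime b)) : ℕ :=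
  Module.finrank ℚ (Module.End.eigenspace (f : Module.End ℚ ↥(D.Rprime b)) (-1))

/-- `φ'(z) = e'(B_z) − e'(B_e)`, where `B_u : x ↦ −u·(w_{H*}·x)` on `R'`; here
`rho'` is the conjugation action of `W_{H*}` on `R'` and `wHs` is the longest element
of `W_{H*}`. -/
def phiP {b : W} (rho' : W → (↥(D.Rprime b) →ₗ[ℚ] ↥(D.Rprime b))) (wHs z : W) : ℤ :=
  (D.eNeg' (-(rho' (z * wHs))) : ℤ) - (D.eNeg' (-(rho' wHs)) : ℤ)

/-- Membership in `A_Λ ⊆ A = Aut(W,S)`: automorphisms acting on `Λ` as conjugation by some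
element of `W_J`. -/
def InALam (a : MulAut W) : Prop :=
  IsDiagAut cs a ∧ ∃ w ∈ D.WJ, ∀ l ∈ D.Lam, a l = w * l * w⁻¹

/-- Membership in the coset `A_Λ* = {a ∘ * : a ∈ A_Λ}`. -/
def InALamStar (c : MulAut W) : Prop := ∃ a : MulAut W, D.InALam a ∧ c = a * D.st

/-- The double coset `W_J x W_J^◇`, where `W_J^◇` is the subgroup generated by
`J^◇ = S − {s₁}`. -/
def DCosetDia (s1 : W) (x : W) : Set W :=
  {y : W | ∃ u ∈ D.WJ, ∃ v ∈ Subgroup.closure (Set.range cs.simple \ {s1}), y = u * x * v}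


end AffineData

/-! ## The Hecke algebra, the Lusztig–Vogan module, and the polynomials `P`, `P^σ` -/

/-- The Hecke algebra of `(W,S)` over `ℚ(q)` (modelled on functions `W → ℚ(q)`, with basis
`TT w = T_w`), together with its bar involution, and the Kazhdan–Lusztig polynomials
`P_{y,w} ∈ ℤ[q]` characterized by their defining properties. -/
structure HeckeData (cs : CoxeterSystem M W) where
  /-- the involution `q ↦ q⁻¹` of `ℚ(q)` -/
  barK : K →+* K
  hbarK_X : barK qK = qK⁻¹
  hbarK_inv : ∀ x, barK (barK x) = x
  /-- the multiplication of the Hecke algebra -/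
  mulH : (W → K) →ₗ[K] (W → K) →ₗ[K] (W → K)
  hmul_assoc : ∀ x y z : W → K, mulH (mulH x y) z = mulH x (mulH y z)
  hmul_one : ∀ x : W → K, mulH (TT 1) x = x ∧ mulH x (TT 1) = x
  hmul_TT : ∀ u v : W, cs.length (u * v) = cs.length u + cs.length v →
    mulH (TT u) (TT v) = TT (u * v)
  hmul_Ts : ∀ s ∈ Set.range cs.simple,
    mulH (TT s) (TT s) = (qK - 1) • TT s + qK • TT (1 : W)
  /-- the bar involution of the Hecke algebra: the ring involution with `q ↦ q⁻¹`,
  `T_w ↦ (T_{w⁻¹})⁻¹` -/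
  barH : (W → K) →+ (W → K)
  hbarH_inv : ∀ x, barH (barH x) = x
  hbarH_smul : ∀ (c : K) (x : W → K), barH (c • x) = barK c • barH x
  hbarH_mul : ∀ x y : W → K, barH (mulH x y) = mulH (barH x) (barH y)
  hbarH_T : ∀ w : W, mulH (barH (TT w)) (TT w⁻¹) = TT (1 : W) ∧
    mulH (TT w⁻¹) (barH (TT w)) = TT (1 : W)
  /-- the Kazhdan–Lusztig polynomials `P_{y,w}` -/
  P : W → W → Polynomial ℤ
  hP_supp : ∀ y w : W, ¬ BruhatLE cs y w → P y w = 0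
  hP_diag : ∀ w : W, P w w = 1
  hP_deg : ∀ y w : W, BruhatLE cs y w → y ≠ w →
    2 * (P y w).natDegree + 1 ≤ cs.length w - cs.length y
  hP_dual : ∀ w : W,
    (qK ^ cs.length w) • barH (fun y => if BruhatLE cs y w then toK (P y w) else 0)
      = fun y => if BruhatLE cs y w then toK (P y w) else 0

/-- The Lusztig–Vogan module `M` over the Hecke algebra `H'` with parameter `q²`, attached to
a length-preserving involutive automorphism `star` of `(W,S)`, together with its bar
involution, and the polynomials `P^σ_{y,w} ∈ ℤ[q]` (for `y, w ∈ I_*`) characterized by their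
defining properties.  Both `H'` and `M` are modelled on functions `W → ℚ(q)`; the basis
element `a_w` of `M` (for `w ∈ I_*`) is `TT w`. -/
structure LVData (cs : CoxeterSystem M W) (star : MulAut W) where
  /-- the involution `q ↦ q⁻¹` of `ℚ(q)` -/
  barK : K →+* K
  hbarK_X : barK qK = qK⁻¹
  hbarK_inv : ∀ x, barK (barK x) = x
  /-- the multiplication of the Hecke algebra `H'` with parameter `q²` -/
  mulH' : (W → K) →ₗ[K] (W → K) →ₗ[K] (W → K)
  hmul'_assoc : ∀ x y z : W → K, mulH' (mulH' x y) z = mulH' x (mulH' y z)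
  hmul'_one : ∀ x : W → K, mulH' (TT 1) x = x ∧ mulH' x (TT 1) = x
  hmul'_TT : ∀ u v : W, cs.length (u * v) = cs.length u + cs.length v →
    mulH' (TT u) (TT v) = TT (u * v)
  hmul'_Ts : ∀ s ∈ Set.range cs.simple,
    mulH' (TT s) (TT s) = (qK ^ 2 - 1) • TT s + (qK ^ 2) • TT (1 : W)
  /-- the bar involution of `H'` -/
  barH' : (W → K) →+ (W → K)
  hbarH'_inv : ∀ x, barH' (barH' x) = x
  hbarH'_smul : ∀ (c : K) (x : W → K), barH' (c • x) = barK c • barH' x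
  hbarH'_mul : ∀ x y : W → K, barH' (mulH' x y) = mulH' (barH' x) (barH' y)
  hbarH'_T : ∀ w : W, mulH' (barH' (TT w)) (TT w⁻¹) = TT (1 : W) ∧
    mulH' (TT w⁻¹) (barH' (TT w)) = TT (1 : W)
  /-- the action of `H'` on the module `M` -/
  actM : (W → K) →ₗ[K] (W → K) →ₗ[K] (W → K)
  hact_one : ∀ m : W → K, actM (TT 1) m = m
  hact_mul : ∀ (h h' : W → K) (m : W → K), actM (mulH' h h') m = actM h (actM h' m)
  hact1 : ∀ s ∈ Set.range cs.simple, ∀ w : W, star w = w⁻¹ →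
    s * w = w * star s → cs.length w < cs.length (s * w) →
    actM (TT s) (TT w) = qK • TT w + (qK + 1) • TT (s * w)
  hact2 : ∀ s ∈ Set.range cs.simple, ∀ w : W, star w = w⁻¹ →
    s * w = w * star s → cs.length (s * w) < cs.length w →
    actM (TT s) (TT w) = (qK ^ 2 - qK - 1) • TT w + (qK ^ 2 - qK) • TT (s * w)
  hact3 : ∀ s ∈ Set.range cs.simple, ∀ w : W, star w = w⁻¹ →
    s * w ≠ w * star s → cs.length w < cs.length (s * w) →
    actM (TT s) (TT w) = TT (s * w * star s)
  hact4 : ∀ s ∈ Set.range cs.simple, ∀ w : W, star w = w⁻¹ →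
    s * w ≠ w * star s → cs.length (s * w) < cs.length w →
    actM (TT s) (TT w) = (qK ^ 2 - 1) • TT w + (qK ^ 2) • TT (s * w * star s)
  /-- the bar involution of the module `M` -/
  barM : (W → K) →+ (W → K)
  hbarM_inv : ∀ m : W → K, barM (barM m) = m
  hbarM_smul : ∀ (c : K) (m : W → K), barM (c • m) = barK c • barM m
  hbarM_act : ∀ (h m : W → K), barM (actM h m) = actM (barH' h) (barM m)
  hbarM_one : barM (TT 1) = TT (1 : W)
  /-- the Lusztig–Vogan polynomials `P^σ_{y,w}` -/
  Psig : W → W → Polynomial ℤ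
  hPsig_supp : ∀ y w : W, ¬ (BruhatLE cs y w ∧ star y = y⁻¹) → Psig y w = 0
  hPsig_diag : ∀ w : W, star w = w⁻¹ → Psig w w = 1
  hPsig_deg : ∀ y w : W, star w = w⁻¹ → star y = y⁻¹ → BruhatLE cs y w → y ≠ w →
    2 * (Psig y w).natDegree + 1 ≤ cs.length w - cs.length y
  hPsig_dual : ∀ w : W, star w = w⁻¹ →
    (qK ^ (2 * cs.length w)) •
        barM (fun y => if BruhatLE cs y w ∧ star y = y⁻¹ then toK (Psig y w) else 0)
      = fun y => if BruhatLE cs y w ∧ star y = y⁻¹ then toK (Psig y w) else 0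

/-! ## The `Z`-polynomials -/

/-- `Z_w(q) = Σ_{y ≤ w} P_{y,w}(q) q^{ℓ(y)}`. -/
def Zpoly (cs : CoxeterSystem M W) (HD : HeckeData cs) (w : W) : K :=
  ∑ᶠ y : W, if BruhatLE cs y w then toK (HD.P y w) * qK ^ cs.length y else 0

/-- `Z_w(−q) = Σ_{y ≤ w} P_{y,w}(−q) (−q)^{ℓ(y)}`. -/
def ZpolyNeg (cs : CoxeterSystem M W) (HD : HeckeData cs) (w : W) : K :=
  ∑ᶠ y : W, if BruhatLE cs y w then atNegQ (HD.P y w) * (-qK) ^ cs.length y else 0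

/-- `Z^σ_w(q) = Σ_{y ≤ w, y ∈ I_*} P^σ_{y,w}(q) q^{ℓ(y)} ((q−1)/(q+1))^{φ(y)}`. -/
def Zsig (cs : CoxeterSystem M W) (D : AffineData cs) (LD : LVData cs D.st) (w : W) : K :=
  ∑ᶠ y : W, if BruhatLE cs y w ∧ D.st y = y⁻¹ then
    toK (LD.Psig y w) * qK ^ cs.length y * ((qK - 1) / (qK + 1)) ^ D.phi y else 0
/-! ## Inversion cocycle -/

section Cox

variable (cs : CoxeterSystem M W)

/-- The permutation-type map attached to a simple reflection. -/
def invStep (i : B) : Function.End (W × ZMod 2) :=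
  fun p => (cs.simple i * p.1 * (cs.simple i)⁻¹, p.2 + if p.1 = cs.simple i then 1 else 0)

lemma invStep_pow (i j : B) (k : ℕ) (t : W) (e : ZMod 2) :
    ((invStep cs i * invStep cs j) ^ k) (t, e) =
      ((cs.simple i * cs.simple j) ^ k * t * ((cs.simple i * cs.simple j) ^ k)⁻¹,
        e + ∑ n ∈ Finset.range (2 * k),
          if t = ((cs.simple i * cs.simple j)⁻¹) ^ n * cs.simple j then 1 else 0) := by
  induction k with
  | zero => simp; rfl
  | succ k ih =>
    have hcomm : ∀ n : ℕ, cs.simple j * (cs.simple i * cs.simple j) ^ n =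
        ((cs.simple i * cs.simple j)⁻¹) ^ n * cs.simple j := by
      intro n
      induction n with
      | zero => simp
      | succ n ihn =>
        rw [pow_succ, ← mul_assoc, ihn, pow_succ]
        simp [mul_assoc]
    have h1 : ((cs.simple i * cs.simple j) ^ k * t * ((cs.simple i * cs.simple j) ^ k)⁻¹
        = cs.simple j) ↔ t = ((cs.simple i * cs.simple j)⁻¹) ^ (2 * k) * cs.simple j := by
      rw [mul_inv_eq_iff_eq_mul, hcomm, ← eq_inv_mul_iff_mul_eq, ← mul_assoc, ← inv_pow, ← pow_add,
        two_mul]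
    have h2 : (cs.simple j * ((cs.simple i * cs.simple j) ^ k * t *
        ((cs.simple i * cs.simple j) ^ k)⁻¹) * (cs.simple j)⁻¹
        = cs.simple i) ↔ t = ((cs.simple i * cs.simple j)⁻¹) ^ (2 * k + 1) * cs.simple j := by
      have : ((cs.simple i * cs.simple j)⁻¹) ^ (2 * k + 1) * cs.simple j =
          ((cs.simple i * cs.simple j) ^ k)⁻¹ * ((cs.simple i * cs.simple j)⁻¹ *
            (cs.simple j * (cs.simple i * cs.simple j) ^ k)) := by
        rw [hcomm, ← inv_pow, ← mul_assoc, ← mul_assoc, ← pow_succ, ← pow_add]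
        congr 2
        omega
      rw [this, mul_inv_eq_iff_eq_mul, ← eq_inv_mul_iff_mul_eq, mul_inv_eq_iff_eq_mul,
        ← eq_inv_mul_iff_mul_eq]
      simp [mul_assoc]
    rw [pow_succ', show 2 * (k + 1) = 2 * k + 1 + 1 by ring, Finset.sum_range_succ,
      Finset.sum_range_succ]
    change invStep cs i (invStep cs j (((invStep cs i * invStep cs j) ^ k) (t, e))) = _
    rw [ih]
    simp only [invStep]
    refine Prod.ext ?_ ?_
    · simp only [pow_succ' (cs.simple i * cs.simple j), mul_inv_rev, mul_assoc]
    · simp only [h1, h2]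
      ring

lemma invStep_liftable : M.IsLiftable (invStep cs) := by
  intro i j
  funext p
  obtain ⟨t, e⟩ := p
  rw [invStep_pow, cs.simple_mul_simple_pow, two_mul, Finset.sum_range_add]
  have : ∀ n, ((cs.simple i * cs.simple j)⁻¹) ^ (M i j + n) =
      ((cs.simple i * cs.simple j)⁻¹) ^ n := by
    intro n
    rw [pow_add, inv_pow, cs.simple_mul_simple_pow]
    simp
  simp only [this, CharTwo.add_self_eq_zero]
  simp
  rfl

/-- The homomorphism encoding the inversion cocycle. -/
def invHom : W →* Function.End (W × ZMod 2) := cs.lift ⟨invStep cs, invStep_liftable cs⟩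

lemma invHom_simple (i : B) : invHom cs (cs.simple i) = invStep cs i :=
  cs.lift_apply_simple (invStep_liftable cs) i

lemma invHom_apply (w t : W) (e : ZMod 2) :
    invHom cs w (t, e) = (w * t * w⁻¹, e + (invHom cs w (t, 0)).2) := by
  induction w using cs.simple_induction_left generalizing t e with
  | one =>
    rw [map_one]
    change (t, e) = (1 * t * 1⁻¹, e + 0)
    simp
  | mul_simple_left w i ih =>
    rw [map_mul]
    have key : ∀ e, (invHom cs (cs.simple i) * invHom cs w) (t, e) =
        invHom cs (cs.simple i) (invHom cs w (t, e)) := fun _ => rfl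
    rw [key, key, ih t e, ih t 0, invHom_simple]
    simp only [invStep]
    refine Prod.ext ?_ ?_
    · simp only; group
    · simp only; ring

/-- The cocycle. -/
def eta (w t : W) : ZMod 2 := (invHom cs w⁻¹ (t, 0)).2

lemma eta_one (t : W) : eta cs 1 t = 0 := by
  simp only [eta, inv_one, map_one]; rfl

lemma eta_simple (i : B) (t : W) : eta cs (cs.simple i) t = if t = cs.simple i then 1 else 0 := by
  simp only [eta, cs.inv_simple, invHom_simple, invStep, zero_add]

lemma eta_mul (x y t : W) : eta cs (x * y) t = eta cs x t + eta cs y (x⁻¹ * t * x) := by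
  unfold eta
  rw [mul_inv_rev, map_mul]
  change (invHom cs y⁻¹ (invHom cs x⁻¹ (t, 0))).2 = _
  rw [invHom_apply cs x⁻¹ t 0, invHom_apply cs y⁻¹]
  simp

lemma eta_refl {t : W} (ht : cs.IsReflection t) : eta cs t t = 1 := by
  obtain ⟨x, i, rfl⟩ := ht
  have h0 := eta_mul cs x x⁻¹ (x * cs.simple i * x⁻¹)
  rw [mul_inv_cancel, eta_one] at h0
  rw [eta_mul, eta_mul, eta_simple]
  have e1 : x⁻¹ * (x * cs.simple i * x⁻¹) * x = cs.simple i := by group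
  have e2 : (x * cs.simple i)⁻¹ * (x * cs.simple i * x⁻¹) * (x * cs.simple i) = cs.simple i := by
    group
  rw [e1] at h0
  rw [e1, e2, if_pos rfl, add_right_comm, ← h0, zero_add]

lemma mem_lis_of_eta_ne (ω : List B) (t : W) (h : eta cs (cs.wordProd ω) t ≠ 0) :
    t ∈ cs.leftInvSeq ω := by
  induction ω generalizing t with
  | nil => exact absurd (by simpa using eta_one cs t) h
  | cons i ω ih =>
    rw [cs.wordProd_cons, eta_mul, eta_simple] at h
    rw [CoxeterSystem.leftInvSeq]
    by_cases hti : t = cs.simple i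
    · simp [hti]
    · rw [if_neg hti, zero_add] at h
      refine List.mem_cons_of_mem _ (List.mem_map.2 ⟨_, ih _ h, ?_⟩)
      simp [MulAut.conj_apply, mul_assoc]

lemma zmod2_cases (a : ZMod 2) : a = 0 ∨ a = 1 := by
  revert a; decide

lemma inv_of_eta {w t : W} (h : eta cs w t ≠ 0) : cs.IsLeftInversion w t := by
  obtain ⟨ω, hω, rfl⟩ := cs.exists_isReduced w
  exact cs.isLeftInversion_of_mem_leftInvSeq hω (mem_lis_of_eta_ne cs ω t h)

lemma inv_iff_eta {w t : W} : cs.IsLeftInversion w t ↔ eta cs w t = 1 := by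
  constructor
  · intro h
    rcases zmod2_cases (eta cs w t) with h0 | h1
    · exfalso
      have h2 : eta cs (t * w) t ≠ 0 := by
        rw [eta_mul, eta_refl cs h.1]
        have : t⁻¹ * t * t = t := by group
        rw [this, h0]; decide
      have h3 := (inv_of_eta cs h2).2
      rw [← mul_assoc, h.1.mul_self, one_mul] at h3
      exact absurd h3 (not_lt.2 h.2.le)
    · exact h1
  · intro h
    exact inv_of_eta cs (by rw [h]; decide)

lemma N_mul (x y t : W) : cs.IsLeftInversion (x * y) t ↔
    ¬ (cs.IsLeftInversion x t ↔ cs.IsLeftInversion y (x⁻¹ * t * x)) := by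
  rw [inv_iff_eta, inv_iff_eta, inv_iff_eta, eta_mul]
  generalize eta cs x t = a
  generalize eta cs y _ = b
  revert a b; decide

lemma N_one (t : W) : ¬ cs.IsLeftInversion 1 t := by
  rw [inv_iff_eta, eta_one]; decide

lemma N_simple (i : B) (t : W) : cs.IsLeftInversion (cs.simple i) t ↔ t = cs.simple i := by
  rw [inv_iff_eta, eta_simple]
  split_ifs with h <;> simp [h]

lemma N_inv (x t : W) : cs.IsLeftInversion x⁻¹ t ↔ cs.IsLeftInversion x (x * t * x⁻¹) := by
  have h := N_one cs t
  rw [← inv_mul_cancel x, N_mul, not_not, inv_inv] at h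
  exact h

lemma N_closure {J : Set W} (hJ : J ⊆ Set.range cs.simple) {v : W}
    (hv : v ∈ Subgroup.closure J) : ∀ t, cs.IsLeftInversion v t → t ∈ Subgroup.closure J := by
  induction hv using Subgroup.closure_induction with
  | mem x hx =>
    obtain ⟨i, rfl⟩ := hJ hx
    intro t ht
    rw [N_simple] at ht
    rw [ht]; exact Subgroup.subset_closure hx
  | one => intro t ht; exact absurd ht (N_one cs t)
  | mul x y hx hy ihx ihy =>
    intro t ht
    rw [N_mul] at ht
    by_cases h1 : cs.IsLeftInversion x t
    · exact ihx t h1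
    · have h2 : cs.IsLeftInversion y (x⁻¹ * t * x) := by tauto
      have h3 := mul_mem (mul_mem hx (ihy _ h2)) (inv_mem hx)
      have : x * (x⁻¹ * t * x) * x⁻¹ = t := by group
      rwa [this] at h3
  | inv x hx ih =>
    intro t ht
    rw [N_inv] at ht
    have h3 := mul_mem (mul_mem (inv_mem hx) (ih _ ht)) hx
    have : x⁻¹ * (x * t * x⁻¹) * x = t := by group
    rwa [this] at h3

lemma exists_simple_N {w : W} (hw : w ≠ 1) : ∃ i, cs.IsLeftInversion w (cs.simple i) := by
  obtain ⟨i, hi⟩ := cs.exists_leftDescent_of_ne_one hw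
  exact ⟨i, (cs.isLeftInversion_simple_iff_isLeftDescent w i).2 hi⟩

lemma mem_of_N (Q : Subgroup W) (n : ℕ) : ∀ g : W, cs.length g ≤ n →
    (∀ t, cs.IsLeftInversion g t → t ∈ Q) →
    g ∈ Subgroup.closure ((Q : Set W) ∩ Set.range cs.simple) := by
  induction n with
  | zero =>
    intro g hg _
    rw [cs.length_eq_zero_iff.1 (Nat.le_zero.1 hg)]
    exact one_mem _
  | succ n ih =>
    intro g hg hN
    by_cases h1 : g = 1
    · rw [h1]; exact one_mem _
    obtain ⟨i, hi⟩ := exists_simple_N cs h1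
    have hiQ := hN _ hi
    have hmem : cs.simple i ∈ Subgroup.closure ((Q : Set W) ∩ Set.range cs.simple) :=
      Subgroup.subset_closure ⟨hiQ, i, rfl⟩
    have h2 : cs.simple i * g ∈ Subgroup.closure ((Q : Set W) ∩ Set.range cs.simple) := by
      refine ih _ (by have := hi.2; omega) ?_
      intro t ht
      rw [N_mul, N_simple] at ht
      by_cases hti : t = cs.simple i
      · rw [hti]; exact hiQ
      · have h3 : cs.IsLeftInversion g ((cs.simple i)⁻¹ * t * cs.simple i) := by tauto
        have h4 := mul_mem (mul_mem hiQ (hN _ h3)) (inv_mem hiQ)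
        have : cs.simple i * ((cs.simple i)⁻¹ * t * cs.simple i) * (cs.simple i)⁻¹ = t := by group
        rwa [this] at h4
    have h5 := mul_mem hmem h2
    rwa [cs.simple_mul_simple_cancel_left] at h5

lemma N_inj {x y : W} (h : ∀ t, cs.IsLeftInversion x t ↔ cs.IsLeftInversion y t) : x = y := by
  by_contra hne
  have h1 : x⁻¹ * y ≠ 1 := fun h => hne (inv_mul_eq_one.1 h)
  obtain ⟨i, hi⟩ := exists_simple_N cs h1
  rw [N_mul, inv_inv, N_inv, h] at hi
  exact hi Iff.rfl

lemma N_longest {J : Set W} (hJ : J ⊆ Set.range cs.simple) {w : W}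
    (hw : w ∈ Subgroup.closure J) (hmax : ∀ u ∈ Subgroup.closure J, cs.length u ≤ cs.length w)
    (t : W) : cs.IsLeftInversion w t ↔ cs.IsReflection t ∧ t ∈ Subgroup.closure J := by
  constructor
  · intro h
    exact ⟨h.1, N_closure cs hJ hw t h⟩
  · rintro ⟨h1, h2⟩
    exact ⟨h1, lt_of_le_of_ne (hmax _ (mul_mem h2 hw)) (h1.length_mul_right_ne w)⟩

/-- Conjugation stays in the subgroup. -/
lemma conj_mem' (P : Subgroup W) {x t : W} (hx : x ∈ P) (ht : t ∈ P) : x⁻¹ * t * x ∈ P :=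
  mul_mem (mul_mem (inv_mem hx) ht) hx

lemma kil1 {J : Set W} (hJ : J ⊆ Set.range cs.simple) {b : W}
    (hb : ∀ t ∈ Subgroup.closure J, ¬ cs.IsLeftInversion b t)
    {x : W} (hx : x ∈ Subgroup.closure J) (hr : b⁻¹ * x * b ∈ Subgroup.closure J)
    {t : W} (ht : cs.IsLeftInversion x t) : b⁻¹ * t * b ∈ Subgroup.closure J := by
  have htP := N_closure cs hJ hx t ht
  have h1 : cs.IsLeftInversion (x * b) t := by
    rw [N_mul]
    have := hb _ (conj_mem' _ hx htP)
    tauto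
  have e : x * b = b * (b⁻¹ * x * b) := by group
  rw [e, N_mul] at h1
  have h2 := hb t htP
  exact N_closure cs hJ hr _ (by tauto)

lemma kil2 {J : Set W} (hJ : J ⊆ Set.range cs.simple) {b : W}
    (hb : ∀ t ∈ Subgroup.closure J, ¬ cs.IsLeftInversion b t)
    (hb' : ∀ t ∈ Subgroup.closure J, ¬ cs.IsLeftInversion b⁻¹ t)
    {i : B} (hx : cs.simple i ∈ Subgroup.closure J)
    (hr : b⁻¹ * cs.simple i * b ∈ Subgroup.closure J) :
    b⁻¹ * cs.simple i * b ∈ Set.range cs.simple := by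
  have hne : b⁻¹ * cs.simple i * b ≠ 1 := by
    intro h
    have : cs.simple i = 1 := by
      have h2 : b * (b⁻¹ * cs.simple i * b) * b⁻¹ = 1 := by rw [h]; group
      rw [← h2]; group
    have h3 := cs.length_simple i
    rw [this, cs.length_one] at h3
    exact absurd h3 (by norm_num)
  obtain ⟨j, hj⟩ := exists_simple_N cs hne
  have h1 : b * cs.simple j * b⁻¹ ∈ Subgroup.closure J := by
    have := kil1 cs hJ hb' hr (by
      have e : b⁻¹⁻¹ * (b⁻¹ * cs.simple i * b) * b⁻¹ = cs.simple i := by group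
      rw [e]; exact hx) hj
    rwa [inv_inv] at this
  have h2 : cs.IsLeftInversion (b * (b⁻¹ * cs.simple i * b)) (b * cs.simple j * b⁻¹) := by
    rw [N_mul]
    have e : b⁻¹ * (b * cs.simple j * b⁻¹) * b = cs.simple j := by group
    rw [e]
    have := hb _ h1
    tauto
  have e : b * (b⁻¹ * cs.simple i * b) = cs.simple i * b := by group
  rw [e, N_mul, N_simple] at h2
  have h3 := hb _ (conj_mem' _ hx h1)
  have h4 : b * cs.simple j * b⁻¹ = cs.simple i := by tauto
  refine ⟨j, ?_⟩
  rw [← h4]; group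

lemma dcoset_main {J : Set W} (hJ : J ⊆ Set.range cs.simple) {b d u v wJ : W}
    (hu : u ∈ Subgroup.closure J) (hv : v ∈ Subgroup.closure J) (hd : d = u * b * v)
    (hb : ∀ t ∈ Subgroup.closure J, ¬ cs.IsLeftInversion b t)
    (hb' : ∀ t ∈ Subgroup.closure J, ¬ cs.IsLeftInversion b⁻¹ t)
    (hdN : ∀ t ∈ Subgroup.closure J, cs.IsReflection t → cs.IsLeftInversion d t)
    (hdN' : ∀ t ∈ Subgroup.closure J, cs.IsReflection t → cs.IsLeftInversion d⁻¹ t)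
    (hwJ : wJ ∈ Subgroup.closure J) (hwJ2 : wJ * wJ = 1)
    (hwN : ∀ t, cs.IsLeftInversion wJ t ↔ cs.IsReflection t ∧ t ∈ Subgroup.closure J) :
    ∃ v' ∈ Subgroup.closure J, d = wJ * b * v' ∧ ∀ t, cs.IsLeftInversion v' t ↔
      cs.IsReflection t ∧ t ∈ Subgroup.closure J ∧ b * t * b⁻¹ ∉ Subgroup.closure J := by
  have hinv : wJ⁻¹ = wJ := inv_eq_of_mul_eq_one_left hwJ2
  have hxN : ∀ t ∈ Subgroup.closure J, ¬ cs.IsLeftInversion (wJ * d) t := by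
    intro t ht h
    have hr := h.1
    rw [N_mul] at h
    have h1 := (hwN t).2 ⟨hr, ht⟩
    have h2 := hdN _ (conj_mem' _ hwJ ht) (by
      have := hr.conj wJ⁻¹
      rwa [inv_inv] at this)
    tauto
  have hp : wJ * u ∈ Subgroup.closure J := mul_mem hwJ hu
  have hpN : ∀ t, cs.IsLeftInversion (wJ * u)⁻¹ t →
      t ∈ Subgroup.closure J ⊓ (Subgroup.closure J).comap (MulAut.conj b⁻¹).toMonoidHom := by
    intro t ht
    have htP := N_closure cs hJ (inv_mem hp) t ht
    refine ⟨htP, ?_⟩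
    have h1 : cs.IsLeftInversion ((wJ * u)⁻¹ * (wJ * d)) t := by
      rw [N_mul, inv_inv]
      have : wJ * u * t * (wJ * u)⁻¹ ∈ Subgroup.closure J := mul_mem (mul_mem hp htP) (inv_mem hp)
      have := hxN _ this
      tauto
    have e : (wJ * u)⁻¹ * (wJ * d) = b * v := by rw [hd]; group
    rw [e, N_mul] at h1
    have h2 := hb t htP
    have h3 := N_closure cs hJ hv (b⁻¹ * t * b) (by tauto)
    simpa [MulAut.conj_apply] using h3
  have h1 := mem_of_N cs _ _ _ le_rfl hpN
  have h2 : (wJ * u)⁻¹ ∈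
      Subgroup.closure J ⊓ (Subgroup.closure J).comap (MulAut.conj b⁻¹).toMonoidHom := by
    refine (Subgroup.closure_le _).2 ?_ h1
    exact Set.inter_subset_left
  have h3 := (inv_mem h2).2
  rw [inv_inv] at h3
  have h4 : b⁻¹ * (wJ * u) * b ∈ Subgroup.closure J := by
    simpa [MulAut.conj_apply] using h3
  have hv' : b⁻¹ * (wJ * u) * b * v ∈ Subgroup.closure J := mul_mem h4 hv
  have hd' : d = wJ * b * (b⁻¹ * (wJ * u) * b * v) := by
    have : wJ * b * (b⁻¹ * (wJ * u) * b * v) = (wJ * wJ) * (u * b * v) := by group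
    rw [this, hwJ2, one_mul, hd]
  refine ⟨_, hv', hd', ?_⟩
  generalize b⁻¹ * (wJ * u) * b * v = v' at hv' hd'
  intro t
  have key : cs.IsReflection t → t ∈ Subgroup.closure J →
      (cs.IsLeftInversion v' t ↔ b * t * b⁻¹ ∉ Subgroup.closure J) := by
    intro hr ht
    have h5 := hdN' _ (conj_mem' _ hv' ht) (by
      have := hr.conj v'⁻¹
      rwa [inv_inv] at this)
    have e : d⁻¹ = v'⁻¹ * (b⁻¹ * wJ) := by
      rw [hd', mul_inv_rev, mul_inv_rev, hinv]
    rw [e, N_mul, N_inv, inv_inv] at h5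
    have e2 : v' * (v'⁻¹ * t * v') * v'⁻¹ = t := by group
    rw [e2, N_mul, inv_inv, hwN] at h5
    have h6 := hb' t ht
    have h7 := hr.conj b
    tauto
  constructor
  · intro h
    have ht := N_closure cs hJ hv' t h
    exact ⟨h.1, ht, (key h.1 ht).1 h⟩
  · rintro ⟨hr, ht, hn⟩
    exact (key hr ht).2 hn

end Cox

/-! ## Linear algebra -/

lemma finrank_fix_eq {V : Type} [AddCommGroup V] [Module ℚ V] [FiniteDimensional ℚ V]
    (R : Submodule ℚ V) (g : V →ₗ[ℚ] V) (g' : R →ₗ[ℚ] R)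
    (hg' : ∀ x : R, (g' x : V) = g x) (hg2 : ∀ x, g (g x) = x)
    (hR : ∀ x, x - g x ∈ R) :
    Module.finrank ℚ V + Module.finrank ℚ (LinearMap.ker (g' - 1)) =
      Module.finrank ℚ R + Module.finrank ℚ (LinearMap.ker (g - 1)) := by
  have h1 := LinearMap.finrank_range_add_finrank_ker (g - 1)
  have h2 := LinearMap.finrank_range_add_finrank_ker (g' - 1)
  have h3 : LinearMap.range (g - 1) = (LinearMap.range (g' - 1)).map R.subtype := by
    ext y
    simp only [LinearMap.mem_range, Submodule.mem_map]
    constructor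
    · rintro ⟨x, rfl⟩
      refine ⟨_, ⟨⟨(1 / 2 : ℚ) • (x - g x), R.smul_mem _ (hR x)⟩, rfl⟩, ?_⟩
      simp only [Submodule.subtype_apply, LinearMap.sub_apply, Module.End.one_apply,
        AddSubgroupClass.coe_sub, hg', map_smul, map_sub, hg2]
      module
    · rintro ⟨_, ⟨x, rfl⟩, rfl⟩
      exact ⟨x, by simp [hg']⟩
  have h4 : Module.finrank ℚ (LinearMap.range (g - 1)) =
      Module.finrank ℚ (LinearMap.range (g' - 1)) := by
    rw [h3]
    exact (LinearEquiv.finrank_eq (Submodule.equivMapOfInjective _ R.injective_subtype _)).symm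
  omega

lemma finrank_fix_conj {V : Type} [AddCommGroup V] [Module ℚ V]
    (g h c : V →ₗ[ℚ] V) (hc : ∀ x, c (c x) = x) (hh : ∀ x, h x = c (g (c x))) :
    Module.finrank ℚ (LinearMap.ker (h - 1)) = Module.finrank ℚ (LinearMap.ker (g - 1)) := by
  have hinj : Function.Injective c := fun x y hxy => by rw [← hc x, hxy, hc]
  have : LinearMap.ker (g - 1) = (LinearMap.ker (h - 1)).map c := by
    ext y
    simp only [Submodule.mem_map, LinearMap.mem_ker, LinearMap.sub_apply, Module.End.one_apply,
      sub_eq_zero]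
    constructor
    · intro hy
      exact ⟨c y, by rw [hh, hc, hy], hc y⟩
    · rintro ⟨x, hx, rfl⟩
      rw [hh] at hx
      apply hinj
      rw [hx, hc]
  rw [this]
  exact LinearEquiv.finrank_eq (Submodule.equivMapOfInjective c hinj _)

lemma eigen_neg {V : Type} [AddCommGroup V] [Module ℚ V] (g : V →ₗ[ℚ] V) :
    Module.End.eigenspace (-g : Module.End ℚ V) (-1) = LinearMap.ker (g - 1) := by
  ext x
  simp [Module.End.mem_eigenspace_iff, sub_eq_zero]

lemma finrank_fix_one {V : Type} [AddCommGroup V] [Module ℚ V] :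
    Module.finrank ℚ (LinearMap.ker ((1 : V →ₗ[ℚ] V) - 1)) = Module.finrank ℚ V := by
  have : ((1 : V →ₗ[ℚ] V) - 1) = 0 := sub_self _
  rw [this, LinearMap.ker_zero, finrank_top]

namespace AffineData

variable {cs : CoxeterSystem M W} (D : AffineData cs)

lemma lin_ext' {V : Type} [AddCommGroup V] [Module ℚ V] {f g : (Fin D.rank → ℚ) →ₗ[ℚ] V}
    (h : ∀ l : D.Lam, f (D.iota l) = g (D.iota l)) : f = g := by
  refine LinearMap.pi_ext' fun i => ?_
  ext1
  have h1 := h (D.freeIso.symm (Multiplicative.ofAdd (Pi.single i 1)))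
  have h2 : D.iota (D.freeIso.symm (Multiplicative.ofAdd (Pi.single i 1))) = Pi.single i 1 := by
    funext j
    simp only [iota, MulEquiv.apply_symm_apply, toAdd_ofAdd]
    by_cases hj : j = i
    · subst hj; simp
    · simp [Pi.single_eq_of_ne hj]
  rw [h2] at h1
  simpa using h1

lemma rho_iota (w : W) (l : D.Lam) : D.rho w (D.iota l) =
    D.iota ⟨w * (l : W) * w⁻¹, D.hLam_normal.conj_mem _ l.2 w⟩ := D.hrho w l

lemma rho_one : D.rho 1 = LinearMap.id := by
  refine D.lin_ext' fun l => ?_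
  rw [rho_iota]
  simp

lemma rho_mul (x y : W) : D.rho (x * y) = (D.rho x).comp (D.rho y) := by
  refine D.lin_ext' fun l => ?_
  rw [LinearMap.comp_apply, rho_iota, rho_iota, rho_iota]
  congr 2
  simp [mul_assoc]

lemma sub_mem_Rprime (b : W) {g : W} (hg : g ∈ D.WHstar b) :
    ∀ x, x - D.rho g x ∈ D.Rprime b := by
  induction hg using Subgroup.closure_induction with
  | mem s hs =>
    have h : LinearMap.range (LinearMap.id - D.rho s) ≤ D.Rprime b := by
      rintro _ ⟨x, rfl⟩
      have : (D.Rprime b).mkQ.comp (LinearMap.id - D.rho s) = 0 := by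
        refine D.lin_ext' fun l => ?_
        rw [LinearMap.comp_apply, LinearMap.zero_apply, Submodule.mkQ_apply,
          Submodule.Quotient.mk_eq_zero, LinearMap.sub_apply, LinearMap.id_apply, rho_iota]
        exact Submodule.subset_span ⟨l, s, hs, rfl⟩
      have h2 := LinearMap.congr_fun this x
      exact (Submodule.Quotient.mk_eq_zero _).1 h2
    intro x
    exact h ⟨x, rfl⟩
  | one => intro x; simp [rho_one]
  | mul x y hx hy ihx ihy =>
    intro v
    have := add_mem (ihy v) (ihx (D.rho y v))
    rw [rho_mul]
    simpa using this
  | inv x hx ih =>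
    intro v
    have h := ih (D.rho x⁻¹ v)
    rw [← LinearMap.comp_apply, ← rho_mul, mul_inv_cancel, rho_one] at h
    have := neg_mem h
    simpa using this

/-! ## The involution -/

lemma Jset_sub : D.Jset ⊆ Set.range cs.simple := Set.diff_subset

lemma s0_notMem : D.s0 ∉ D.WJ := by
  intro h
  have h1 : D.WJ = ⊤ := by
    rw [eq_top_iff, ← cs.subgroup_closure_range_simple, Subgroup.closure_le]
    intro s hs
    by_cases hs0 : s = D.s0
    · rw [hs0]; exact h
    · exact Subgroup.subset_closure ⟨hs, hs0⟩
  have h2 := D.hWJ_fin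
  have h3 : (Subgroup.closure (Set.range cs.simple \ {D.s0})) = ⊤ := h1
  rw [h3] at h2
  have := D.infW
  exact Set.infinite_univ h2

lemma wJ_sq : D.wJ * D.wJ = 1 := by
  have := D.hst_J 1 (one_mem _)
  rw [map_one, mul_one] at this
  exact this.symm

lemma length_st_le (w : W) : cs.length (D.st w) ≤ cs.length w := by
  obtain ⟨ω, hω, rfl⟩ := cs.exists_isReduced w
  rw [hω.eq]
  clear hω
  induction ω with
  | nil => simp
  | cons i ω ih =>
    rw [cs.wordProd_cons, map_mul]
    obtain ⟨j, hj⟩ := D.hst_S _ ⟨i, rfl⟩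
    have h1 := cs.length_mul_le (D.st (cs.simple i)) (D.st (cs.wordProd ω))
    rw [← hj, cs.length_simple] at h1
    rw [← hj, List.length_cons]
    omega

lemma length_st (w : W) : cs.length (D.st w) = cs.length w := by
  refine le_antisymm (D.length_st_le w) ?_
  have := D.length_st_le (D.st w)
  rwa [D.hst_inv] at this

lemma refl_st {t : W} (h : cs.IsReflection t) : cs.IsReflection (D.st t) := by
  obtain ⟨w, i, rfl⟩ := h
  obtain ⟨j, hj⟩ := D.hst_S _ ⟨i, rfl⟩
  exact ⟨D.st w, j, by rw [map_mul, map_mul, map_inv, ← hj]⟩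

lemma N_st {w t : W} (h : cs.IsLeftInversion w t) : cs.IsLeftInversion (D.st w) (D.st t) := by
  refine ⟨D.refl_st h.1, ?_⟩
  rw [← map_mul, length_st, length_st]
  exact h.2

lemma st_WJ {u : W} (h : u ∈ D.WJ) : D.st u ∈ D.WJ := by
  rw [D.hst_J u h]
  exact mul_mem (mul_mem D.hwJ_mem h) D.hwJ_mem

lemma mem_Jset {i : B} (h : cs.simple i ∈ D.WJ) : cs.simple i ∈ D.Jset :=
  ⟨⟨i, rfl⟩, fun h0 => D.s0_notMem (by
    have h1 : cs.simple i = D.s0 := h0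
    rwa [h1] at h)⟩

end AffineData

/-- One has `φ(d) = φ'(w_{H*}) + φ(b)`, where `d = d_μ = μ w_J` and `b`
are the longest and shortest elements of the double coset `W_J μ W_J`. -/
theorem phi_d_eq_phiP_add_phi_b (cs : CoxeterSystem M W) (D : AffineData cs)
    (mu b wHs : W) (hmu : D.IsDominant mu)
    (hb_mem : b ∈ D.DCoset mu)
    (hb_min : ∀ y ∈ D.DCoset mu, cs.length b ≤ cs.length y)
    (hwHs_mem : wHs ∈ D.WHstar b)
    (hwHs_max : ∀ u ∈ D.WHstar b, cs.length u ≤ cs.length wHs)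
    (rho' : W → (↥(D.Rprime b) →ₗ[ℚ] ↥(D.Rprime b)))
    (hrho' : ∀ u ∈ D.WHstar b, ∀ x : ↥(D.Rprime b),
      ((rho' u x : Fin D.rank → ℚ)) = D.rho u (x : Fin D.rank → ℚ)) :
    D.phi (mu * D.wJ) = D.phiP rho' wHs wHs + D.phi b := by
  have hJ := D.Jset_sub
  have hinv : D.wJ⁻¹ = D.wJ := inv_eq_of_mul_eq_one_left D.wJ_sq
  have hwJ : D.wJ ∈ D.WJ := D.hwJ_mem
  have hwN : ∀ t, cs.IsLeftInversion D.wJ t ↔ cs.IsReflection t ∧ t ∈ D.WJ :=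
    N_longest cs hJ D.hwJ_mem D.hwJ_max
  have hmuL := hmu.1
  -- the longest element
  have hdst : D.st (mu * D.wJ) = (mu * D.wJ)⁻¹ := by
    rw [map_mul, D.hst_Lam mu hmuL, D.hst_J D.wJ D.hwJ_mem, D.wJ_sq, one_mul]
    rw [mul_inv_rev, mul_inv_rev, mul_inv_rev, inv_inv]
    simp [mul_assoc, hinv, D.wJ_sq]
  have hdN' : ∀ t ∈ D.WJ, cs.IsReflection t → cs.IsLeftInversion (mu * D.wJ)⁻¹ t := by
    intro t ht hr
    refine ⟨hr, ?_⟩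
    have h1 := ((hwN t).2 ⟨hr, ht⟩).2
    rw [cs.length_inv, hmu.2, mul_inv_rev, hinv, ← mul_assoc]
    have h2 := cs.length_mul_le (t * D.wJ) mu⁻¹
    rw [cs.length_inv] at h2
    omega
  have hdN : ∀ t ∈ D.WJ, cs.IsReflection t → cs.IsLeftInversion (mu * D.wJ) t := by
    intro t ht hr
    have h1 := D.N_st (hdN' _ (D.st_WJ ht) (D.refl_st hr))
    rwa [← hdst, D.hst_inv, D.hst_inv] at h1
  -- the shortest element
  obtain ⟨u, hu, v, hv, hbuv⟩ := hb_mem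
  have hb : ∀ t ∈ D.WJ, ¬ cs.IsLeftInversion b t := by
    intro t ht h
    refine absurd h.2 (not_lt.2 (hb_min _ ⟨t * u, mul_mem ht hu, v, hv, ?_⟩))
    rw [hbuv]; group
  have hb' : ∀ t ∈ D.WJ, ¬ cs.IsLeftInversion b⁻¹ t := by
    intro t ht h
    have h1 := h.2
    rw [cs.length_inv, ← cs.length_inv, mul_inv_rev, inv_inv] at h1
    refine absurd h1 (not_lt.2 (hb_min _ ⟨u, hu, v * t⁻¹, mul_mem hv (inv_mem ht), ?_⟩))
    rw [hbuv]; group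
  have hdinv : (mu * D.wJ)⁻¹ = (D.wJ * v) * b⁻¹ * u := by
    rw [hbuv, mul_inv_rev, hinv]; group
  obtain ⟨v', hv'P, hdv', hv'N⟩ := dcoset_main cs hJ (b := b⁻¹) (mul_mem hwJ hv) hu hdinv
    hb' (by rw [inv_inv]; exact hb) hdN' (by rw [inv_inv]; exact hdN) hwJ D.wJ_sq hwN
  -- Kilmoyer
  have hHJ : D.Hset b ⊆ Set.range cs.simple := fun s hs => hJ hs.1
  have hHsS : D.Hstar b ⊆ Set.range cs.simple := by
    rintro _ ⟨s, hs, rfl⟩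
    exact D.hst_S _ (hHJ hs)
  have hK1 : ∀ x ∈ Subgroup.closure (D.Hset b), x ∈ D.WJ ∧ b⁻¹ * x * b ∈ D.WJ := by
    have : Subgroup.closure (D.Hset b) ≤
        D.WJ ⊓ D.WJ.comap (MulAut.conj b⁻¹).toMonoidHom := by
      rw [Subgroup.closure_le]
      rintro s ⟨hs, r, hr, hrs⟩
      refine ⟨Subgroup.subset_closure hs, ?_⟩
      have hrs' : b * r * b⁻¹ = s := hrs
      have : b⁻¹ * s * b = r := by rw [← hrs']; group
      have h2 : b⁻¹ * s * b ∈ D.WJ := by rw [this]; exact Subgroup.subset_closure hr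
      simpa [MulAut.conj_apply] using h2
    intro x hx
    exact ⟨(this hx).1, by simpa [MulAut.conj_apply] using (this hx).2⟩
  have hK2 : ∀ x ∈ D.WJ, b⁻¹ * x * b ∈ D.WJ → x ∈ Subgroup.closure (D.Hset b) := by
    intro x hx hxb
    have h1 := mem_of_N cs (D.WJ ⊓ D.WJ.comap (MulAut.conj b⁻¹).toMonoidHom) _ x le_rfl (by
      intro t ht
      refine ⟨N_closure cs hJ hx t ht, ?_⟩
      have : b⁻¹ * t * b ∈ D.WJ := kil1 cs hJ hb hx hxb ht
      simpa [MulAut.conj_apply] using this)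
    refine Subgroup.closure_mono ?_ h1
    rintro _ ⟨hs, i, rfl⟩
    have h2 : cs.simple i ∈ D.WJ := hs.1
    have h3 : b⁻¹ * cs.simple i * b ∈ D.WJ := by simpa [MulAut.conj_apply] using hs.2
    refine ⟨D.mem_Jset h2, b⁻¹ * cs.simple i * b, ?_, ?_⟩
    · obtain ⟨j, hj⟩ := kil2 cs hJ hb hb' h2 h3
      rw [← hj]
      rw [← hj] at h3
      exact D.mem_Jset h3
    · change b * (b⁻¹ * cs.simple i * b) * b⁻¹ = cs.simple i
      group
  have hstar : ∀ x, x ∈ D.WHstar b ↔ D.st x ∈ Subgroup.closure (D.Hset b) := by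
    intro x
    have : D.WHstar b = (Subgroup.closure (D.Hset b)).map D.st.toMonoidHom := by
      rw [MonoidHom.map_closure]; rfl
    rw [this]
    constructor
    · rintro ⟨y, hy, rfl⟩
      change D.st (D.st y) ∈ _
      rw [D.hst_inv]; exact hy
    · intro h
      exact ⟨_, h, D.hst_inv x⟩
  have hwHsN := N_longest cs hHsS hwHs_mem hwHs_max
  have hsq : wHs * wHs = 1 := by
    have : wHs = wHs⁻¹ := by
      refine N_inj cs fun t => ?_
      rw [N_inv, hwHsN, hwHsN, cs.isReflection_conj_iff]
      refine and_congr_right fun _ => ?_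
      constructor
      · intro h
        exact mul_mem (mul_mem hwHs_mem h) (inv_mem hwHs_mem)
      · intro h
        have h2 := mul_mem (mul_mem (inv_mem hwHs_mem) h) hwHs_mem
        have e : wHs⁻¹ * (wHs * t * wHs⁻¹) * wHs = t := by group
        rwa [e] at h2
    nth_rewrite 2 [this]
    exact mul_inv_cancel wHs
  have hwK := (hstar wHs).1 hwHs_mem
  have hwKP := (hK1 _ hwK).1
  have hwKN : ∀ t, cs.IsLeftInversion (D.st wHs) t ↔
      cs.IsReflection t ∧ t ∈ Subgroup.closure (D.Hset b) := by
    intro t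
    constructor
    · intro h
      exact ⟨h.1, N_closure cs hHJ hwK t h⟩
    · rintro ⟨hr, ht⟩
      have h1 := (hwHsN (D.st t)).2 ⟨D.refl_st hr, (hstar _).2 (by rwa [D.hst_inv])⟩
      have h2 := D.N_st h1
      rwa [D.hst_inv] at h2
  have hv'eq : v' = D.st wHs * D.wJ := by
    refine N_inj cs fun t => ?_
    rw [hv'N, N_mul, hwKN, hwN, inv_inv]
    have h1 : (D.st wHs)⁻¹ * t * D.st wHs ∈ D.WJ ↔ t ∈ D.WJ := by
      constructor
      · intro h
        have h2 := mul_mem (mul_mem hwKP h) (inv_mem hwKP)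
        have e : D.st wHs * ((D.st wHs)⁻¹ * t * D.st wHs) * (D.st wHs)⁻¹ = t := by group
        rwa [e] at h2
      · exact conj_mem' _ hwKP
    have h2 : cs.IsReflection ((D.st wHs)⁻¹ * t * D.st wHs) ↔ cs.IsReflection t := by
      have := cs.isReflection_conj_iff (D.st wHs)⁻¹ t
      rwa [inv_inv] at this
    rw [h1, h2]
    have h3 := hK1 t
    have h4 := hK2 t
    change (_ ∧ t ∈ D.WJ ∧ ¬ (b⁻¹ * t * b ∈ D.WJ)) ↔ _
    tauto
  -- the projection of b
  have hbeq : b = D.st wHs * D.wJ * mu := by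
    rw [hv'eq, mul_inv_rev, hinv] at hdv'
    have h1 : mu⁻¹ = b⁻¹ * (D.st wHs * D.wJ) := by
      have := congrArg (fun z => D.wJ⁻¹ * z) hdv'
      simpa [mul_assoc] using this
    have h2 : b = (D.st wHs * D.wJ) * (b⁻¹ * (D.st wHs * D.wJ))⁻¹ := by group
    rw [← h1, inv_inv] at h2
    exact h2
  have hprb : D.pr b = D.st wHs * D.wJ := by
    refine (D.hs0_hyper b).unique (D.hpr b) ⟨mul_mem hwKP hwJ, ?_⟩
    rw [hbeq]
    exact D.hLam_normal.conj_mem _ hmuL _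
  have hprd : D.pr (mu * D.wJ) = D.wJ := by
    refine (D.hs0_hyper (mu * D.wJ)).unique (D.hpr _) ⟨hwJ, ?_⟩
    rw [mul_inv_cancel_right]
    exact hmuL
  have hrsq : ∀ w : W, w * w = 1 → ∀ x, D.rho w (D.rho w x) = x := by
    intro w hw x
    rw [← LinearMap.comp_apply, ← D.rho_mul, hw, D.rho_one]; rfl
  have hF := finrank_fix_eq (D.Rprime b) (D.rho wHs) (rho' wHs) (hrho' wHs hwHs_mem)
    (hrsq _ hsq) (D.sub_mem_Rprime b hwHs_mem)
  have hwHsP : wHs ∈ D.WJ := by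
    have := D.st_WJ hwKP
    rwa [D.hst_inv] at this
  have hC := finrank_fix_conj (D.rho wHs) (D.rho (D.st wHs)) (D.rho D.wJ) (hrsq _ D.wJ_sq) (by
    intro x
    rw [D.hst_J wHs hwHsP, D.rho_mul, D.rho_mul]; rfl)
  have hid : rho' (wHs * wHs) = 1 := by
    refine LinearMap.ext fun x => Subtype.ext ?_
    rw [hrho' _ (mul_mem hwHs_mem hwHs_mem), hsq, D.rho_one]; rfl
  unfold AffineData.phi AffineData.phiP AffineData.eNeg AffineData.eNeg' AffineData.Amap
  rw [hprb, hprd, mul_assoc, D.wJ_sq, mul_one, one_mul, D.rho_one, hid]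
  rw [eigen_neg, eigen_neg, eigen_neg, eigen_neg, eigen_neg, hC]
  have e1 : Module.finrank ℚ (LinearMap.ker
      ((LinearMap.id : (Fin D.rank → ℚ) →ₗ[ℚ] (Fin D.rank → ℚ)) - 1)) =
      Module.finrank ℚ (Fin D.rank → ℚ) := by
    have : ((LinearMap.id : (Fin D.rank → ℚ) →ₗ[ℚ] (Fin D.rank → ℚ)) - 1) = 0 := sub_self _
    rw [this, LinearMap.ker_zero, finrank_top]
  have e2 : Module.finrank ℚ (LinearMap.ker
      ((1 : D.Rprime b →ₗ[ℚ] D.Rprime b) - 1)) = Module.finrank ℚ (D.Rprime b) := by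
    exact finrank_fix_one (V := D.Rprime b)
  rw [e1, e2]
  omega

end LY
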